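/- arXiv:0705.0844 — 2 statements merged into one kernel-verified Lean document; each statement's English description precedes it below -/
import Mathlib

section
/- For p = 2 and p = 3, the group algebra ℚ_p[D_6 × ℤ/2] over the field of p-adic numbers is isomorphic, as a ring, to the product (ℚ_p)⁸ × (M₂(ℚ_p))⁴ of eight copies of ℚ_p and four copies of the ring of 2 × 2 matrices over ℚ_p. -/
namespace D6Z2

abbrev G := DihedralGroup 6 × Multiplicative (ZMod 2)

/-- sign of `i` mod 2 with base `a` -/
def sg (a : Bool) (n : ℕ) : ℤ := if a then (-1) ^ n else 1

/-- linear characters of `D_6` -/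
def chD (a b : Bool) : DihedralGroup 6 → ℤ
  | .r i => sg a i.val
  | .sr i => sg b 1 * sg a i.val

def chZ (e : Bool) (z : Multiplicative (ZMod 2)) : ℤ := sg e (z.toAdd : ZMod 2).val

def rhoD : DihedralGroup 6 → Matrix (Fin 2) (Fin 2) ℤ
  | .r i => !![0, -1; 1, 1] ^ i.val
  | .sr i => !![0, 1; 1, 0] * !![0, -1; 1, 1] ^ i.val

theorem chD_mul : ∀ (a b : Bool) (x y : DihedralGroup 6),
    chD a b (x * y) = chD a b x * chD a b y := by
  rintro a b (i | i) (j | j) <;> revert a b i j <;> decide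

theorem chZ_mul : ∀ (e : Bool) (x y : Multiplicative (ZMod 2)),
    chZ e (x * y) = chZ e x * chZ e y := by
  decide

set_option maxRecDepth 100000 in
theorem rhoD_mul : ∀ (x y : DihedralGroup 6), rhoD (x * y) = rhoD x * rhoD y := by
  rintro (i | i) (j | j) <;> revert i j <;> decide

theorem chD_one : ∀ a b, chD a b 1 = 1 := by decide
theorem chZ_one : ∀ e, chZ e 1 = 1 := by decide
theorem rhoD_one : rhoD 1 = 1 := by decide

def chi (a b e : Bool) : G →* ℤ where
  toFun g := chD a b g.1 * chZ e g.2
  map_one' := by simp [chD_one, chZ_one]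
  map_mul' x y := by simp only [Prod.fst_mul, Prod.snd_mul, chD_mul, chZ_mul]; ring

def rho (a e : Bool) : G →* Matrix (Fin 2) (Fin 2) ℤ where
  toFun g := (chi a false e g) • rhoD g.1
  map_one' := by simp [rhoD_one]
  map_mul' x y := by simp only [Prod.fst_mul, map_mul, rhoD_mul, smul_mul_smul_comm]

def bit (k : ℕ) (i : ℕ) : Bool := i.testBit k

theorem trace_id : ∀ g : G, (∑ i : Fin 8, chi (bit 0 i) (bit 1 i) (bit 2 i) g)
    + 2 * (∑ j : Fin 4, (rho (bit 0 j) (bit 1 j) g).trace) = if g = 1 then 24 else 0 := by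
  rintro ⟨i | i, z⟩ <;> revert i z <;> decide

variable (K : Type) [Field K] [CharZero K]

abbrev T := (Fin 8 → K) × (Fin 4 → Matrix (Fin 2) (Fin 2) K)

def big : G →* T K :=
  MonoidHom.prod
    (MonoidHom.pi fun i : Fin 8 =>
      ((Int.castRingHom K : ℤ →* K)).comp (chi (bit 0 i) (bit 1 i) (bit 2 i)))
    (MonoidHom.pi fun j : Fin 4 =>
      (((Int.castRingHom K).mapMatrix : Matrix (Fin 2) (Fin 2) ℤ →+* _) : _ →* _).comp
        (rho (bit 0 j) (bit 1 j)))

noncomputable def F : MonoidAlgebra K G →ₐ[K] T K := MonoidAlgebra.lift K (T K) G (big K)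

def tau : T K →ₗ[K] K where
  toFun t := (∑ i, t.1 i) + 2 * ∑ j, (t.2 j).trace
  map_add' x y := by
    simp only [Prod.fst_add, Prod.snd_add, Pi.add_apply, Matrix.trace_add, Finset.sum_add_distrib]
    ring
  map_smul' c x := by
    simp only [Prod.smul_fst, Prod.smul_snd, Pi.smul_apply, Matrix.trace_smul,
      smul_eq_mul, ← Finset.mul_sum, RingHom.id_apply]
    ring

theorem tau_big (g : G) : tau K (big K g) = if g = 1 then 24 else 0 := by
  have h := congrArg (Int.cast : ℤ → K) (trace_id g)
  have h2 : ((if g = 1 then 24 else 0 : ℤ) : K) = if g = 1 then 24 else 0 := by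
    split_ifs <;> simp
  rw [← h2, ← h]
  simp [tau, big, Matrix.trace, MonoidHom.pi]

theorem tau_F (x : MonoidAlgebra K G) : tau K (F K x) = 24 * x.coeff 1 := by
  induction x using MonoidAlgebra.induction_linear with
  | zero => simp
  | add f g hf hg => rw [map_add, map_add, hf, hg, ← mul_add]; rfl
  | single g c =>
    rw [F, MonoidAlgebra.lift_single, map_smul, tau_big, smul_eq_mul]
    by_cases h : g = 1
    · subst h; simp [mul_comm]
    · simp [h, MonoidAlgebra.coeff_single_apply]

theorem F_inj : Function.Injective (F K) := by
  rw [injective_iff_map_eq_zero]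
  intro x hx
  ext g
  have h := tau_F K (MonoidAlgebra.single g⁻¹ 1 * x)
  rw [map_mul, hx, mul_zero, map_zero, MonoidAlgebra.coeff_single_mul_apply] at h
  simpa using h

theorem F_bij : Function.Bijective (F K) := by
  refine ⟨F_inj K, ?_⟩
  have e := LinearMap.injective_iff_surjective_of_finrank_eq_finrank
    (f := (F K).toLinearMap) ?_
  · exact e.1 (F_inj K)
  · rw [(MonoidAlgebra.coeffLinearEquiv K).finrank_eq]
    simp [Module.finrank_prod, Module.finrank_matrix, Module.finrank_pi_fintype]
    simp [← Nat.card_eq_fintype_card, DihedralGroup.nat_card]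

theorem main : Nonempty (MonoidAlgebra K G ≃+* T K) :=
  ⟨(AlgEquiv.ofBijective (F K) (F_bij K)).toRingEquiv⟩

end D6Z2

/-- For `p = 2` and `p = 3`, `ℚ_p[D_6 × ℤ/2] ≅ (ℚ_p)⁸ × (M₂(ℚ_p))⁴` as rings. -/
theorem padic_group_algebra_D6_prod_Z2 :
    Nonempty
      (MonoidAlgebra ℚ_[2] (DihedralGroup 6 × Multiplicative (ZMod 2)) ≃+*
        (Fin 8 → ℚ_[2]) × (Fin 4 → Matrix (Fin 2) (Fin 2) ℚ_[2])) ∧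
    Nonempty
      (MonoidAlgebra ℚ_[3] (DihedralGroup 6 × Multiplicative (ZMod 2)) ≃+*
        (Fin 8 → ℚ_[3]) × (Fin 4 → Matrix (Fin 2) (Fin 2) ℚ_[3])) :=
  ⟨D6Z2.main ℚ_[2], D6Z2.main ℚ_[3]⟩
end

section
/- The quotient of the group algebra 𝔽₃[D_6 × ℤ/2] by its Jacobson radical is isomorphic, as a ring, to the product (𝔽₃)⁸ of eight copies of the field with three elements. (This is the algebraic content behind the identification K₀(ẑ₃[D_6 × ℤ/2]) ≅ K₀(𝔽₃[(ℤ/2)³]) ≅ ℤ⁸.) -/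
abbrev GG := DihedralGroup 6 × Multiplicative (ZMod 2)
abbrev AA := MonoidAlgebra (ZMod 3) GG

def chiFun (i : Fin 8) : GG → ZMod 3
  | (.r k, m) => (-1) ^ (k.val * (i.val % 2) + (Multiplicative.toAdd m).val * (i.val / 4))
  | (.sr k, m) => (-1) ^ (i.val / 2 % 2 + k.val * (i.val % 2) + (Multiplicative.toAdd m).val * (i.val / 4))

def chi (i : Fin 8) : GG →* ZMod 3 where
  toFun := chiFun i
  map_one' := by revert i; decide +kernel
  map_mul' := by revert i; decide +kernel

def sec (v : Fin 8) : GG :=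
  (if v.val / 2 % 2 = 0 then .r (3 * (v.val : ZMod 6)) else .sr (3 * (v.val : ZMod 6)), Multiplicative.ofAdd ((v.val / 4 : ℕ) : ZMod 2))

def pr : GG → Fin 8
  | (.r k, m) => Fin.ofNat 8 (k.val % 2 + 4 * (Multiplicative.toAdd m).val)
  | (.sr k, m) => Fin.ofNat 8 (k.val % 2 + 2 + 4 * (Multiplicative.toAdd m).val)

def tt : GG := (.r 2, 1)

theorem orth1 : ∀ (g : GG) (v : Fin 8), ∑ i, - (chiFun i g * chiFun i (sec v)) = if v = pr g then 1 else 0 := by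
  decide +kernel
theorem orth2 : ∀ (i j : Fin 8), ∑ v, - (chiFun i (sec v) * chiFun j (sec v)) = if i = j then 1 else 0 := by
  decide +kernel
theorem dec : ∀ g : GG, g = sec (pr g) ∨ g = tt * sec (pr g) ∨ g = tt * (tt * sec (pr g)) := by
  decide +kernel
theorem tcomm : ∀ g : GG, g * tt = tt * g ∨ g * tt = tt * (tt * g) := by
  decide +kernel
theorem t3 : tt * (tt * tt) = 1 := by decide +kernel

noncomputable def ofG (g : GG) : AA := MonoidAlgebra.of (ZMod 3) GG g
noncomputable def uu : AA := ofG tt - 1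

theorem of_mul (g h : GG) : ofG (g * h) = ofG g * ofG h := map_mul _ _ _

theorem ind {P : AA → Prop} (h : ∀ g, P (ofG g)) (ha : ∀ x y, P x → P y → P (x + y))
    (hs : ∀ (c : ZMod 3) x, P x → P (c • x)) (x : AA) : P x :=
  MonoidAlgebra.induction_on x h ha hs

noncomputable def ff : AA →ₐ[ZMod 3] (Fin 8 → ZMod 3) :=
  AlgHom.pi fun i => MonoidAlgebra.lift (ZMod 3) (ZMod 3) GG (chi i)

theorem ff_of (g : GG) (i : Fin 8) : ff (ofG g) i = chiFun i g := by
  simp [ff, ofG, chi]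

noncomputable def sg : (Fin 8 → ZMod 3) →ₗ[ZMod 3] AA where
  toFun e := ∑ v, (∑ i, - (e i * chiFun i (sec v))) • ofG (sec v)
  map_add' x y := by
    rw [← Finset.sum_add_distrib]
    refine Finset.sum_congr rfl fun v _ => ?_
    rw [← add_smul, ← Finset.sum_add_distrib]
    congr 1
    refine Finset.sum_congr rfl fun v _ => ?_
    simp only [Pi.add_apply]; ring
  map_smul' c x := by
    simp only [Finset.smul_sum, smul_smul, Finset.mul_sum, RingHom.id_apply, Pi.smul_apply, smul_eq_mul]
    refine Finset.sum_congr rfl fun v _ => ?_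
    congr 1
    refine Finset.sum_congr rfl fun v _ => ?_
    ring

theorem sg_ff_of (g : GG) : sg (ff (ofG g)) = ofG (sec (pr g)) := by
  simp only [sg, LinearMap.coe_mk, AddHom.coe_mk, ff_of, orth1]
  simp

theorem ff_sg (e : Fin 8 → ZMod 3) : ff (sg e) = e := by
  funext j
  simp only [sg, LinearMap.coe_mk, AddHom.coe_mk, map_sum, map_smul, Finset.sum_apply, Pi.smul_apply, ff_of, smul_eq_mul, Finset.sum_mul]
  rw [Finset.sum_comm]
  have : ∀ i, ∑ v, -(e i * chiFun i (sec v)) * chiFun j (sec v) = e i * (if i = j then 1 else 0) := by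
    intro i
    rw [← orth2, Finset.mul_sum]
    refine Finset.sum_congr rfl fun v _ => ?_
    ring
  rw [Finset.sum_congr rfl fun i _ => this i]
  simp

theorem sub_memU (x : AA) : ∃ w, x - sg (ff x) = uu * w := by
  induction x using ind with
  | h g =>
    rw [sg_ff_of]
    rcases dec g with h | h | h
    · exact ⟨0, by rw [← h]; simp⟩
    · refine ⟨ofG (sec (pr g)), ?_⟩
      conv_lhs => enter [1]; rw [h]
      rw [of_mul, uu]; noncomm_ring
    · refine ⟨ofG tt * ofG (sec (pr g)) + ofG (sec (pr g)), ?_⟩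
      conv_lhs => enter [1]; rw [h]
      rw [of_mul, of_mul, uu]; noncomm_ring
  | ha x y hx hy =>
    obtain ⟨a, ha⟩ := hx
    obtain ⟨b, hb⟩ := hy
    exact ⟨a + b, by rw [mul_add, ← ha, ← hb, map_add, map_add]; abel⟩
  | hs c x hx =>
    obtain ⟨a, ha⟩ := hx
    exact ⟨c • a, by rw [mul_smul_comm, ← ha, map_smul, map_smul, smul_sub]⟩

theorem mul_u (x : AA) : ∃ w, x * uu = uu * w := by
  induction x using ind with
  | h g =>
    rcases tcomm g with h | h
    · refine ⟨ofG g, ?_⟩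
      rw [uu, mul_sub, sub_mul, ← of_mul, ← of_mul, h]; simp
    · refine ⟨ofG tt * ofG g + ofG g, ?_⟩
      rw [uu, mul_sub, ← of_mul, h, of_mul, of_mul]; noncomm_ring
  | ha x y hx hy =>
    obtain ⟨a, ha⟩ := hx
    obtain ⟨b, hb⟩ := hy
    exact ⟨a + b, by rw [mul_add, ← ha, ← hb, add_mul]⟩
  | hs c x hx =>
    obtain ⟨a, ha⟩ := hx
    exact ⟨c • a, by rw [mul_smul_comm, ← ha, smul_mul_assoc]⟩

theorem u3 : uu * (uu * uu) = 0 := by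
  have h3 : (3 : AA) = 0 := by
    have : algebraMap (ZMod 3) AA 3 = 0 := by
      rw [show (3 : ZMod 3) = 0 from rfl, map_zero]
    rwa [map_ofNat] at this
  have ht : ofG tt * (ofG tt * ofG tt) = 1 := by
    rw [← of_mul, ← of_mul, t3]; exact map_one _
  have : uu * (uu * uu) = ofG tt * (ofG tt * ofG tt) - 1 - 3 * (ofG tt * ofG tt - ofG tt) := by
    rw [uu]; noncomm_ring
  rw [this, ht, h3]; simp

theorem nil_of_ker (x : AA) (hx : ff x = 0) : IsNilpotent x := by
  obtain ⟨w, hw⟩ := sub_memU x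
  rw [hx, map_zero, sub_zero] at hw
  obtain ⟨a, ha⟩ := mul_u w
  obtain ⟨b, hb⟩ := mul_u (a * w)
  refine ⟨3, ?_⟩
  calc x ^ 3 = uu * (w * uu) * (w * uu) * w := by rw [hw]; noncomm_ring
    _ = uu * uu * (a * w * uu) * w := by
        rw [show uu * uu * (a * w * uu) * w = uu * (uu * a) * (w * uu) * w by noncomm_ring, ← ha]
    _ = uu * (uu * uu) * b * w := by rw [hb]; noncomm_ring
    _ = 0 := by rw [u3]; simp

theorem jac_iff (x : AA) : x ∈ TwoSidedIdeal.jacobson (⊥ : TwoSidedIdeal AA) ↔ ff x = 0 := by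
  rw [TwoSidedIdeal.mem_jacobson_iff]
  constructor
  · intro h
    funext i
    by_contra hne
    obtain ⟨z, hz⟩ := h (algebraMap (ZMod 3) AA (-(ff x i)⁻¹))
    rw [TwoSidedIdeal.mem_bot] at hz
    have := congrFun (congrArg ff hz) i
    simp only [map_sub, map_add, map_mul, map_one, AlgHom.commutes, map_zero, Pi.sub_apply, Pi.add_apply, Pi.mul_apply, Pi.one_apply, Pi.zero_apply, Pi.algebraMap_apply, Algebra.algebraMap_self, RingHom.id_apply, mul_assoc, neg_mul] at this
    rw [inv_mul_cancel₀ hne] at this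
    simp at this
  · intro h y
    have hn : IsNilpotent (y * x) := nil_of_ker _ (by rw [map_mul, h, mul_zero])
    obtain ⟨v, hv⟩ := hn.isUnit_one_add
    refine ⟨(v⁻¹ : AAˣ), ?_⟩
    rw [TwoSidedIdeal.mem_bot, mul_assoc]
    have := v.inv_mul
    rw [hv] at this
    rw [← this]; noncomm_ring

/-- The quotient of `𝔽₃[D_6 × ℤ/2]` by its Jacobson radical (the Jacobson
radical of the zero two-sided ideal) is isomorphic, as a ring, to `(𝔽₃)⁸`. -/
theorem F3_group_algebra_D6_prod_Z2_mod_jacobson :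
    Nonempty
      ((TwoSidedIdeal.jacobson
          (⊥ : TwoSidedIdeal
            (MonoidAlgebra (ZMod 3) (DihedralGroup 6 × Multiplicative (ZMod 2))))).ringCon.Quotient
        ≃+* (Fin 8 → ZMod 3)) := by
  have h : (TwoSidedIdeal.jacobson (⊥ : TwoSidedIdeal AA)).ringCon = RingCon.ker ff.toRingHom := by
    ext x y
    rw [TwoSidedIdeal.rel_iff, jac_iff, map_sub, sub_eq_zero]
    rfl
  rw [h]
  exact ⟨RingCon.quotientKerEquivOfSurjective ff.toRingHom fun e => ⟨sg e, ff_sg e⟩⟩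
end
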